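/- Let 1 < p < q, M ≥ 1, and let f : [0,1) → (0,∞) be non-decreasing, bounded below by some ε > 0, and satisfying ((1/t) ∫_0^t f)·((1/t) ∫_0^t f^{-1/(q-1)})^{q-1} ≤ M for every t ∈ (0,1]. Set c = M^{1/(q-1)}. Then for every t ∈ (0,1]: ((q−1)/(q−p)) ∫_0^t f(s)^{-1/(q-1)} ((1/s) ∫_0^s f)^{-1/(p-1)+1/(q-1)} ds ≤ c ∫_0^t ((1/s) ∫_0^s f)^{-1/(p-1)} ds + ((p−1)/(q−p)) · M^{1/(p-1)} · c^{-(q-p)/(p-1)} · t · ((1/t) ∫_0^t f)^{-1/(p-1)}. -/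

import Mathlib

open MeasureTheory Set intervalIntegral

open Filter Topology

lemma aux_hd (u : ℝ → ℝ) (hu : IntervalIntegrable u volume 0 1) (x : ℝ) (hx : x ∈ Ioo (0:ℝ) 1)
    (L : ℝ) (h : Tendsto u (𝓝[>] x) (𝓝 L)) :
    HasDerivWithinAt (fun t => ∫ y in (0:ℝ)..t, u y) L (Ici x) x := by
  have hu' : IntervalIntegrable u volume 0 x := hu.mono_set (by
    rw [uIcc_of_le hx.1.le, uIcc_of_le zero_le_one]; exact Icc_subset_Icc le_rfl hx.2.le)
  refine integral_hasDerivWithinAt_of_tendsto_ae_right (t := Ioi x) hu' ?_ (h.mono_left inf_le_left)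
  refine ⟨Ioc 0 1, ?_, ?_⟩
  · exact mem_nhdsWithin_of_mem_nhds (Ioc_mem_nhds hx.1 hx.2)
  · exact ((intervalIntegrable_iff_integrableOn_Ioc_of_le zero_le_one).1 hu).aestronglyMeasurable

lemma aux_int (u : ℝ → ℝ) (hm : AEStronglyMeasurable u (volume.restrict (Ioc (0:ℝ) 1))) (K : ℝ)
    (h : ∀ x ∈ Ioo (0:ℝ) 1, |u x| ≤ K) : IntervalIntegrable u volume 0 1 := by
  rw [intervalIntegrable_iff_integrableOn_Ioo_of_le zero_le_one]
  refine Integrable.of_bound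
    (hm.mono_measure (Measure.restrict_mono Ioo_subset_Ioc_self le_rfl)) K ?_
  exact (ae_restrict_mem measurableSet_Ioo).mono fun x hx => h x hx

lemma aux_core (a b c ε : ℝ) (ha : 0 < a) (hab : a < b) (hc : 0 < c) (hε : 0 < ε)
    (f : ℝ → ℝ) (hfm : Measurable f) (hmono : MonotoneOn f (Ico 0 1))
    (hlb : ∀ x ∈ Ico (0 : ℝ) 1, ε ≤ f x) (hfi : IntervalIntegrable f volume 0 1)
    (hA : ∀ t ∈ Ioc (0 : ℝ) 1, (∫ y in (0:ℝ)..t, f y ^ (-a)) ≤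
      c * t * ((1 / t) * ∫ y in (0 : ℝ)..t, f y) ^ (-a)) (t : ℝ) (ht : t ∈ Ioc (0:ℝ) 1) :
    b * (∫ s in (0 : ℝ)..t, f s ^ (-a) * ((1 / s) * ∫ y in (0 : ℝ)..s, f y) ^ (-b + a)) ≤
    (b - a) * c * (∫ s in (0 : ℝ)..t, ((1 / s) * ∫ y in (0 : ℝ)..s, f y) ^ (-b)) +
      a * c * t * ((1 / t) * ∫ y in (0 : ℝ)..t, f y) ^ (-b) := by
  have hb : 0 < b := ha.trans hab
  obtain ⟨P, hP⟩ : ∃ P : ℝ → ℝ, P = fun s => ∫ y in (0:ℝ)..s, f y := ⟨_, rfl⟩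
  obtain ⟨F, hF⟩ : ∃ F : ℝ → ℝ, F = fun s => (1 / s) * ∫ y in (0:ℝ)..s, f y := ⟨_, rfl⟩
  have hFP : F = fun s => (1 / s) * P s := by rw [hF, hP]
  obtain ⟨Q, hQ⟩ : ∃ Q : ℝ → ℝ, Q = fun s => ∫ y in (0:ℝ)..s, f y ^ (-a) := ⟨_, rfl⟩
  have hA' : ∀ t ∈ Ioc (0 : ℝ) 1, Q t ≤ c * t * F t ^ (-a) := by
    intro t ht; rw [hQ, hF]; exact hA t ht
  have e0 : ∀ s, ((1 / s) * ∫ y in (0:ℝ)..s, f y) = F s := fun s => by rw [hF]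
  simp only [e0]
  obtain ⟨U1, hU1⟩ : ∃ U : ℝ → ℝ, U = fun t => ∫ s in (0:ℝ)..t, f s ^ (-a) * F s ^ (-b + a) :=
    ⟨_, rfl⟩
  obtain ⟨U2, hU2⟩ : ∃ U : ℝ → ℝ, U = fun t => ∫ s in (0:ℝ)..t, F s ^ (-b) := ⟨_, rfl⟩
  have e1 : (∫ s in (0:ℝ)..t, f s ^ (-a) * F s ^ (-b + a)) = U1 t := by rw [hU1]
  have e2 : (∫ s in (0:ℝ)..t, F s ^ (-b)) = U2 t := by rw [hU2]
  rw [e1, e2]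
  -- sub-interval integrability
  have hsub : ∀ u : ℝ → ℝ, IntervalIntegrable u volume 0 1 → ∀ s ∈ Ioc (0:ℝ) 1,
      IntervalIntegrable u volume 0 s := fun u hu s hs => hu.mono_set (by
    rw [uIcc_of_le hs.1.le, uIcc_of_le zero_le_one]; exact Icc_subset_Icc le_rfl hs.2)
  have hcont : ∀ u : ℝ → ℝ, IntervalIntegrable u volume 0 1 →
      ContinuousOn (fun t => ∫ y in (0:ℝ)..t, u y) (Icc 0 1) := fun u hu => by
    have := continuousOn_primitive_interval' hu (left_mem_uIcc)
    rwa [uIcc_of_le zero_le_one] at this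
  have hPc : ContinuousOn P (Icc 0 1) := by rw [hP]; exact hcont f hfi
  have hFc : ContinuousOn F (Ioc 0 1) := by
    rw [hFP]
    refine ContinuousOn.mul ?_ (hPc.mono Ioc_subset_Icc_self)
    exact continuousOn_const.div continuousOn_id fun x hx => hx.1.ne'
  have hPge : ∀ s ∈ Ioc (0:ℝ) 1, s * ε ≤ P s := by
    intro s hs
    have := integral_mono_on_of_le_Ioo (a := 0) (b := s) (f := fun _ => ε) (g := f) (μ := volume)
      hs.1.le (by simp) (hsub f hfi s hs) (fun x hx => hlb x ⟨hx.1.le, hx.2.trans_le hs.2⟩)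
    rw [hP]; simpa using this
  have hPle : ∀ s ∈ Ioo (0:ℝ) 1, P s ≤ s * f s := by
    intro s hs
    have := integral_mono_on_of_le_Ioo (a := 0) (b := s) (f := f) (g := fun _ => f s) (μ := volume)
      hs.1.le (hsub f hfi s ⟨hs.1, hs.2.le⟩) (by simp)
      (fun x hx => hmono ⟨hx.1.le, hx.2.trans hs.2⟩ ⟨hs.1.le, hs.2⟩ hx.2.le)
    rw [hP]; simpa using this
  have hFge : ∀ s ∈ Ioc (0:ℝ) 1, ε ≤ F s := by
    intro s hs
    rw [hFP]
    have := hPge s hs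
    show ε ≤ 1 / s * P s
    rw [one_div_mul_eq_div, le_div_iff₀ hs.1]; linarith
  have hFpos : ∀ s ∈ Ioc (0:ℝ) 1, 0 < F s := fun s hs => hε.trans_le (hFge s hs)
  have hFrc : ∀ r : ℝ, ContinuousOn (fun s => F s ^ r) (Ioc 0 1) := fun r =>
    hFc.rpow_const fun x hx => Or.inl (hFpos x hx).ne'
  have hFrb : ∀ r : ℝ, 0 < r → ∀ s ∈ Ioc (0:ℝ) 1, F s ^ (-r) ≤ ε ^ (-r) := fun r hr s hs =>
    Real.rpow_le_rpow_of_nonpos hε (hFge s hs) (by linarith)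
  have hfrb : ∀ s ∈ Ioo (0:ℝ) 1, f s ^ (-a) ≤ ε ^ (-a) := fun s hs =>
    Real.rpow_le_rpow_of_nonpos hε (hlb s ⟨hs.1.le, hs.2⟩) (by linarith)
  have hfpos : ∀ s ∈ Ioo (0:ℝ) 1, 0 < f s := fun s hs => hε.trans_le (hlb s ⟨hs.1.le, hs.2⟩)
  have hi1 : IntervalIntegrable (fun s => f s ^ (-a)) volume 0 1 := by
    refine aux_int _ (hfm.pow_const _).aestronglyMeasurable (ε ^ (-a)) fun x hx => ?_
    rw [abs_of_nonneg (Real.rpow_nonneg (hfpos x hx).le _)]; exact hfrb x hx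
  have hi2 : IntervalIntegrable (fun s => F s ^ (-b)) volume 0 1 := by
    refine aux_int _ ((hFrc _).aestronglyMeasurable measurableSet_Ioc) (ε ^ (-b)) fun x hx => ?_
    have hx' := Ioo_subset_Ioc_self hx
    rw [abs_of_nonneg (Real.rpow_nonneg (hFpos x hx').le _)]; exact hFrb b hb x hx'
  have hi3 : IntervalIntegrable (fun s => f s ^ (-a) * F s ^ (-b + a)) volume 0 1 := by
    refine aux_int _ ((hfm.pow_const _).aestronglyMeasurable.mul
      ((hFrc _).aestronglyMeasurable measurableSet_Ioc)) (ε ^ (-a) * ε ^ (-(b - a))) fun x hx => ?_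
    have hx' := Ioo_subset_Ioc_self hx
    have h1 := Real.rpow_nonneg (hfpos x hx).le (-a)
    have h2 := Real.rpow_nonneg (hFpos x hx').le (-b + a)
    rw [abs_of_nonneg (mul_nonneg h1 h2)]
    refine mul_le_mul (hfrb x hx) ?_ h2 (by positivity)
    have := hFrb (b - a) (by linarith) x hx'
    rwa [show -(b - a) = -b + a by ring] at this ⊢
  have hQc : ContinuousOn Q (Icc 0 1) := by rw [hQ]; exact hcont _ hi1
  have hU2c : ContinuousOn U2 (Icc 0 1) := by rw [hU2]; exact hcont _ hi2
  have hU1c : ContinuousOn U1 (Icc 0 1) := by rw [hU1]; exact hcont _ hi3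
  have hQnn : ∀ s ∈ Ioc (0:ℝ) 1, 0 ≤ Q s := by
    intro s hs
    have := integral_mono_on_of_le_Ioo (a := 0) (b := s) (f := fun _ => (0:ℝ))
      (g := fun y => f y ^ (-a)) (μ := volume)
      hs.1.le (by simp) (hsub _ hi1 s hs)
      (fun x hx => Real.rpow_nonneg (hfpos x ⟨hx.1, hx.2.trans_le hs.2⟩).le _)
    rw [hQ]; simpa using this
  have hU2nn : ∀ s ∈ Ioc (0:ℝ) 1, 0 ≤ U2 s := by
    intro s hs
    have := integral_mono_on_of_le_Ioo (a := 0) (b := s) (f := fun _ => (0:ℝ))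
      (g := fun y => F y ^ (-b)) (μ := volume)
      hs.1.le (by simp) (hsub _ hi2 s hs)
      (fun x hx => Real.rpow_nonneg (hFpos x ⟨hx.1, hx.2.le.trans hs.2⟩).le _)
    rw [hU2]; simpa using this
  obtain ⟨H, hH⟩ : ∃ H : ℝ → ℝ, H = fun s => b * U1 s - b * (Q s * F s ^ (-b + a))
      - (b - a) * c * U2 s + (b - a) * c * (s * F s ^ (-b)) := ⟨_, rfl⟩
  have hHc : ContinuousOn H (Ioc 0 1) := by
    rw [hH]
    have := hU1c.mono Ioc_subset_Icc_self
    have := hU2c.mono Ioc_subset_Icc_self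
    have := hQc.mono Ioc_subset_Icc_self
    have := hFrc (-b)
    have := hFrc (-b + a)
    fun_prop
  have hder : ∀ x ∈ Ioo (0:ℝ) 1, ∃ d ≤ 0, HasDerivWithinAt H d (Ici x) x := by
    intro x hx
    have hx' := Ioo_subset_Ioc_self hx
    have hFx := hFpos x hx'
    have hx0 : 0 < x := hx.1
    obtain ⟨L, hL⟩ : ∃ L, Tendsto f (𝓝[>] x) (𝓝 L) :=
      ⟨_, MonotoneOn.tendsto_nhdsWithin_Ioo_right (nonempty_Ioo.2 hx.2)
        (hmono.mono fun y hy => ⟨hx0.le.trans hy.1.le, hy.2⟩)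
        ⟨ε, by rintro _ ⟨y, hy, rfl⟩; exact hlb y ⟨hx0.le.trans hy.1.le, hy.2⟩⟩⟩
    have hfL : f x ≤ L := by
      refine ge_of_tendsto hL ?_
      filter_upwards [Ioo_mem_nhdsGT hx.2] with y hy
      exact hmono ⟨hx0.le, hx.2⟩ ⟨hx0.le.trans hy.1.le, hy.2⟩ hy.1.le
    have hLpos : 0 < L := (hfpos x hx).trans_le hfL
    have dP : HasDerivWithinAt P L (Ici x) x := by rw [hP]; exact aux_hd f hfi x hx L hL
    have hLa : Tendsto (fun s => f s ^ (-a)) (𝓝[>] x) (𝓝 (L ^ (-a))) :=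
      hL.rpow_const (Or.inl hLpos.ne')
    have dQ : HasDerivWithinAt Q (L ^ (-a)) (Ici x) x := by rw [hQ]; exact aux_hd _ hi1 x hx _ hLa
    have hFr : ∀ r : ℝ, Tendsto (fun s => F s ^ r) (𝓝[>] x) (𝓝 (F x ^ r)) := fun r =>
      ((hFrc r).continuousAt (Ioc_mem_nhds hx.1 hx.2)).tendsto.mono_left nhdsWithin_le_nhds
    have dU2 : HasDerivWithinAt U2 (F x ^ (-b)) (Ici x) x := by
      rw [hU2]; exact aux_hd _ hi2 x hx _ (hFr _)
    have dU1 : HasDerivWithinAt U1 (L ^ (-a) * F x ^ (-b + a)) (Ici x) x := by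
      rw [hU1]; exact aux_hd _ hi3 x hx _ (hLa.mul (hFr _))
    obtain ⟨D, hD0, dF⟩ : ∃ D, 0 ≤ D ∧ HasDerivWithinAt F D (Ici x) x := by
      have h1 : HasDerivWithinAt (fun s => P s / s) ((L * x - P x * 1) / x ^ 2) (Ici x) x :=
        dP.div (hasDerivWithinAt_id x _) hx0.ne'
      have h2 : F = fun s => P s / s := by
        rw [hFP]; funext s; rw [one_div_mul_eq_div]
      rw [← h2] at h1
      refine ⟨_, ?_, h1⟩
      · have := hPle x hx
        apply div_nonneg _ (by positivity)
        nlinarith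
    have dFr : ∀ r : ℝ, HasDerivWithinAt (fun s => F s ^ r) (D * r * F x ^ (r - 1)) (Ici x) x :=
      fun r => dF.rpow_const (Or.inl hFx.ne')
    have dH := (((dU1.const_mul b).sub ((dQ.mul (dFr (-b + a))).const_mul b)).sub
        (dU2.const_mul ((b - a) * c))).add
        (((hasDerivWithinAt_id x _).mul (dFr (-b))).const_mul ((b - a) * c))
    refine ⟨_, ?_, by rw [hH]; exact dH⟩
    · have h3 : F x ^ (-b - 1) = F x ^ (-a) * F x ^ (-b + a - 1) := by
        rw [← Real.rpow_add hFx]; congr 1; ring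
      have h4 : 0 ≤ F x ^ (-b + a - 1) := Real.rpow_nonneg hFx.le _
      have h5 := hA' x hx'
      have h6 : 0 ≤ ((b - a) * b * D * F x ^ (-b + a - 1)) * (c * x * F x ^ (-a) - Q x) := by
        refine mul_nonneg (mul_nonneg (mul_nonneg (mul_nonneg ?_ hb.le) hD0) h4) ?_ <;> linarith
      simp only [id, h3]
      linarith
  have hdec : ∀ η ∈ Ioc 0 t, H t ≤ H η := by
    intro η hη
    have hη0 : 0 < η := hη.1
    choose! d hd0 hd using hder
    refine image_le_of_deriv_right_le_deriv_boundary (f := H) (f' := d) (a := η) (b := t)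
      (B := fun _ => H η) (B' := fun _ => 0) (hHc.mono fun y hy => ⟨hη0.trans_le hy.1, hy.2.trans ht.2⟩)
      (fun x hx => hd x ⟨hη0.trans_le hx.1, hx.2.trans_le ht.2⟩) le_rfl continuousOn_const
      (fun x _ => hasDerivWithinAt_const _ _ _)
      (fun x hx => hd0 x ⟨hη0.trans_le hx.1, hx.2.trans_le ht.2⟩) ⟨hη.2, le_rfl⟩
  have hH0 : H t ≤ 0 := by
    have hlim : Tendsto (fun η => b * U1 η + (b - a) * c * (η * ε ^ (-b))) (𝓝[>] 0)
        (𝓝 (b * U1 0 + (b - a) * c * (0 * ε ^ (-b)))) := by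
      have h1 : Tendsto U1 (𝓝[>] 0) (𝓝 (U1 0)) := by
        have : ContinuousWithinAt U1 (Icc 0 1) 0 := hU1c 0 (by simp)
        refine this.tendsto.mono_left ?_
        exact nhdsWithin_le_of_mem (Icc_mem_nhdsGT zero_lt_one)
      have h2 : Tendsto (fun η : ℝ => η) (𝓝[>] 0) (𝓝 0) := nhdsWithin_le_nhds
      exact (h1.const_mul b).add ((h2.mul_const _).const_mul _)
    have hz : U1 0 = 0 := by rw [hU1]; simp
    rw [hz] at hlim
    simp only [mul_zero, zero_mul, add_zero] at hlim
    refine ge_of_tendsto hlim ?_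
    filter_upwards [Ioc_mem_nhdsGT ht.1] with η hη
    refine (hdec η hη).trans ?_
    have hη' : η ∈ Ioc (0:ℝ) 1 := ⟨hη.1, hη.2.trans ht.2⟩
    rw [hH]
    have h1 : 0 ≤ b * (Q η * F η ^ (-b + a)) :=
      mul_nonneg hb.le (mul_nonneg (hQnn η hη') (Real.rpow_nonneg (hFpos η hη').le _))
    have hk : 0 ≤ (b - a) * c := mul_nonneg (by linarith) hc.le
    have h2 : 0 ≤ (b - a) * c * U2 η := mul_nonneg hk (hU2nn η hη')
    have h3 : (b - a) * c * (η * F η ^ (-b)) ≤ (b - a) * c * (η * ε ^ (-b)) :=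
      mul_le_mul_of_nonneg_left (mul_le_mul_of_nonneg_left (hFrb b hb η hη') hη.1.le) hk
    show b * U1 η - b * (Q η * F η ^ (-b + a))
      - (b - a) * c * U2 η + (b - a) * c * (η * F η ^ (-b)) ≤ _
    linarith
  rw [hH] at hH0
  have h1 : Q t * F t ^ (-b + a) ≤ c * t * F t ^ (-b) := by
    have h3 : F t ^ (-b) = F t ^ (-a) * F t ^ (-b + a) := by
      rw [← Real.rpow_add (hFpos t ht)]; congr 1; ring
    rw [h3, ← mul_assoc]
    exact mul_le_mul_of_nonneg_right (hA' t ht) (Real.rpow_nonneg (hFpos t ht).le _)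
  have h2 := mul_le_mul_of_nonneg_left h1 hb.le
  have hH1 : b * U1 t - b * (Q t * F t ^ (-b + a))
      - (b - a) * c * U2 t + (b - a) * c * (t * F t ^ (-b)) ≤ 0 := hH0
  linarith

/-- integrability of `f` on `(0,1)` follows from the `A_q` condition -/
lemma aux_integrable (r ε M : ℝ) (hr : 0 < r) (hε : 0 < ε)
    (f : ℝ → ℝ) (hfm : Measurable f) (hmono : MonotoneOn f (Ico 0 1))
    (hlb : ∀ x ∈ Ico (0 : ℝ) 1, ε ≤ f x)
    (hAq : ∀ t ∈ Ioc (0 : ℝ) 1,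
      ((1 / t) * ∫ y in (0 : ℝ)..t, f y) *
        ((1 / t) * ∫ y in (0 : ℝ)..t, f y ^ (-(1 / r))) ^ r ≤ M) :
    IntervalIntegrable f volume 0 1 := by
  have hfpos : ∀ s ∈ Ico (0:ℝ) 1, 0 < f s := fun s hs => hε.trans_le (hlb s hs)
  have hloc : ∀ t < 1, IntegrableOn f (Ioc 0 t) := by
    intro t ht
    rcases le_or_gt t 0 with h0 | h0
    · rw [Ioc_eq_empty (not_lt.2 h0)]; exact integrableOn_empty
    have hm : MonotoneOn f (Icc 0 t) := hmono.mono fun y hy => ⟨hy.1, hy.2.trans_lt ht⟩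
    have := hm.integrableOn_isCompact (μ := volume) isCompact_Icc
    exact this.mono_set Ioc_subset_Icc_self
  have hgi : IntervalIntegrable (fun s => f s ^ (-(1 / r))) volume 0 1 := by
    refine aux_int _ (hfm.pow_const _).aestronglyMeasurable (ε ^ (-(1 / r))) fun x hx => ?_
    have hx' := Ioo_subset_Ico_self hx
    rw [abs_of_nonneg (Real.rpow_nonneg (hfpos x hx').le _)]
    exact Real.rpow_le_rpow_of_nonpos hε (hlb x hx') (by simp [hr.le])
  have hsub : ∀ u v : ℝ, 0 ≤ u → u ≤ v → v ≤ 1 →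
      IntervalIntegrable (fun s => f s ^ (-(1 / r))) volume u v := fun u v hu huv hv =>
    hgi.mono_set (by
      rw [uIcc_of_le huv, uIcc_of_le zero_le_one]; exact Icc_subset_Icc hu hv)
  obtain ⟨k, hk⟩ : ∃ k, k = ∫ y in (0:ℝ)..(1/2), f y ^ (-(1 / r)) := ⟨_, rfl⟩
  have hk0 : 0 < k := by
    rw [hk]
    refine intervalIntegral_pos_of_pos_on (hsub 0 (1/2) le_rfl (by norm_num) (by norm_num)) ?_
      (by norm_num)
    intro x hx
    exact Real.rpow_pos_of_pos (hfpos x ⟨hx.1.le, hx.2.trans (by norm_num)⟩) _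
  have hbd : ∀ t ∈ Ioo (1/2:ℝ) 1, (∫ y in Ioc 0 t, ‖f y‖) ≤ M / k ^ r := by
    intro t ht
    have ht0 : 0 < t := by linarith [ht.1]
    have e : (∫ y in Ioc 0 t, ‖f y‖) = ∫ y in (0:ℝ)..t, f y := by
      rw [integral_of_le ht0.le]
      refine setIntegral_congr_fun measurableSet_Ioc fun y hy => ?_
      exact abs_of_pos (hfpos y ⟨hy.1.le, hy.2.trans_lt ht.2⟩)
    have hnn : 0 ≤ ∫ y in (0:ℝ)..t, f y := by
      rw [← e]; exact integral_nonneg fun _ => norm_nonneg _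
    rw [e, le_div_iff₀ (Real.rpow_pos_of_pos hk0 r)]
    refine le_trans ?_ (hAq t ⟨ht0, ht.2.le⟩)
    have h1t : 1 ≤ 1 / t := by rw [le_div_iff₀ ht0]; linarith [ht.2]
    have hkQ : k ≤ ∫ y in (0:ℝ)..t, f y ^ (-(1 / r)) := by
      rw [hk, ← integral_add_adjacent_intervals (hsub 0 (1/2) le_rfl (by norm_num) (by norm_num))
        (hsub (1/2) t (by norm_num) ht.1.le ht.2.le)]
      have : 0 ≤ ∫ y in (1/2:ℝ)..t, f y ^ (-(1 / r)) := by
        refine integral_nonneg ht.1.le fun y hy => Real.rpow_nonneg (hfpos y ⟨?_, ?_⟩).le _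
        · linarith [hy.1]
        · exact hy.2.trans_lt ht.2
      linarith
    refine mul_le_mul ?_ ?_ (Real.rpow_nonneg hk0.le _) (by positivity)
    · nlinarith
    · refine Real.rpow_le_rpow hk0.le ?_ hr.le
      nlinarith
  rw [intervalIntegrable_iff_integrableOn_Ioc_of_le zero_le_one]
  have hlim : Tendsto (fun n : ℕ => 1 - 1 / ((n:ℝ) + 1)) atTop (𝓝 1) := by
    simpa using (tendsto_one_div_add_atTop_nhds_zero_nat (𝕜 := ℝ)).const_sub 1
  have hlt : ∀ n : ℕ, 1 - 1 / ((n:ℝ) + 1) < 1 := fun n => by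
    have : 0 < 1 / ((n:ℝ) + 1) := by positivity
    linarith
  refine integrableOn_Ioc_of_intervalIntegral_norm_bounded_right (l := atTop) (I := M / k ^ r)
    (fun n : ℕ => hloc _ (hlt n)) hlim ?_
  filter_upwards [hlim.eventually (lt_mem_nhds (show (1/2:ℝ) < 1 by norm_num))] with n hn
  exact hbd _ ⟨hn, hlt n⟩

theorem key_inequality_one (p q ε M : ℝ) (hp : 1 < p) (hpq : p < q) (hε : 0 < ε)
    (hM : 1 ≤ M) (f : ℝ → ℝ) (hfm : Measurable f)
    (hmono : MonotoneOn f (Set.Ico 0 1))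
    (hlb : ∀ x ∈ Set.Ico (0 : ℝ) 1, ε ≤ f x)
    (hpos : ∀ x ∈ Set.Ico (0 : ℝ) 1, 0 < f x)
    (hAq : ∀ t ∈ Set.Ioc (0 : ℝ) 1,
      ((1 / t) * ∫ y in (0 : ℝ)..t, f y) *
        ((1 / t) * ∫ y in (0 : ℝ)..t, f y ^ (-(1 / (q - 1)))) ^ (q - 1) ≤ M) :
    ∀ t ∈ Set.Ioc (0 : ℝ) 1,
      ((q - 1) / (q - p)) *
          (∫ s in (0 : ℝ)..t, f s ^ (-(1 / (q - 1))) *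
            ((1 / s) * ∫ y in (0 : ℝ)..s, f y) ^ (-(1 / (p - 1)) + 1 / (q - 1)))
        ≤ M ^ (1 / (q - 1)) *
            (∫ s in (0 : ℝ)..t, ((1 / s) * ∫ y in (0 : ℝ)..s, f y) ^ (-(1 / (p - 1))))
          + ((p - 1) / (q - p)) * M ^ (1 / (p - 1)) *
              (M ^ (1 / (q - 1))) ^ (-((q - p) / (p - 1))) * t *
              ((1 / t) * ∫ y in (0 : ℝ)..t, f y) ^ (-(1 / (p - 1))) := by
  intro t ht
  have hq1 : 0 < q - 1 := by linarith
  have hp1 : 0 < p - 1 := by linarith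
  have hqp : 0 < q - p := by linarith
  have hM0 : 0 < M := by linarith
  have hfi : IntervalIntegrable f volume 0 1 :=
    aux_integrable (q - 1) ε M hq1 hε f hfm hmono hlb hAq
  have hc : 0 < M ^ (1 / (q - 1)) := Real.rpow_pos_of_pos hM0 _
  have hab : 1 / (q - 1) < 1 / (p - 1) := one_div_lt_one_div_of_lt hp1 (by linarith)
  have hA : ∀ t ∈ Ioc (0 : ℝ) 1, (∫ y in (0:ℝ)..t, f y ^ (-(1 / (q - 1)))) ≤
      M ^ (1 / (q - 1)) * t * ((1 / t) * ∫ y in (0 : ℝ)..t, f y) ^ (-(1 / (q - 1))) := by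
    intro t ht
    have h := hAq t ht
    have hQ0 : 0 ≤ ∫ y in (0:ℝ)..t, f y ^ (-(1 / (q - 1))) := by
      rw [integral_of_le ht.1.le, integral_Ioc_eq_integral_Ioo]
      refine setIntegral_nonneg measurableSet_Ioo fun y hy => ?_
      exact Real.rpow_nonneg (hpos y ⟨hy.1.le, hy.2.trans_le ht.2⟩).le _
    have hP0 : 0 < ∫ y in (0:ℝ)..t, f y := by
      refine intervalIntegral_pos_of_pos_on (hfi.mono_set ?_) ?_ ht.1
      · rw [uIcc_of_le ht.1.le, uIcc_of_le zero_le_one]; exact Icc_subset_Icc le_rfl ht.2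
      · intro y hy; exact hpos y ⟨hy.1.le, hy.2.trans_le ht.2⟩
    have ht0 : 0 < t := ht.1
    generalize (∫ y in (0:ℝ)..t, f y ^ (-(1 / (q - 1)))) = Q at *
    generalize (∫ y in (0:ℝ)..t, f y) = P at *
    have hF : 0 < 1 / t * P := by positivity
    have hG : 0 ≤ 1 / t * Q := by positivity
    generalize 1 / t * P = F at *
    have h1 : (1 / t * Q) ^ (q - 1) ≤ M / F := by rw [le_div_iff₀ hF]; linarith
    have h2 := Real.rpow_le_rpow (Real.rpow_nonneg hG _) h1 (one_div_pos.2 hq1).le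
    rw [← Real.rpow_mul hG, mul_one_div_cancel hq1.ne', Real.rpow_one,
      Real.div_rpow hM0.le hF.le, one_div_mul_eq_div, div_le_iff₀ ht0] at h2
    rw [Real.rpow_neg hF.le]
    calc Q ≤ _ := h2
      _ = _ := by rw [div_eq_mul_inv]; ring
  have key := aux_core (1 / (q - 1)) (1 / (p - 1)) (M ^ (1 / (q - 1))) ε (one_div_pos.2 hq1) hab
    hc hε f hfm hmono hlb hfi hA t ht
  have hconst : M ^ (1 / (p - 1)) * (M ^ (1 / (q - 1))) ^ (-((q - p) / (p - 1))) =
      M ^ (1 / (q - 1)) := by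
    rw [← Real.rpow_mul hM0.le, ← Real.rpow_add hM0]
    congr 1
    field_simp
    ring
  rw [mul_assoc ((p - 1) / (q - p)), hconst]
  generalize (∫ s in (0 : ℝ)..t, f s ^ (-(1 / (q - 1))) *
            ((1 / s) * ∫ y in (0 : ℝ)..s, f y) ^ (-(1 / (p - 1)) + 1 / (q - 1))) = X at *
  generalize (∫ s in (0 : ℝ)..t, ((1 / s) * ∫ y in (0 : ℝ)..s, f y) ^ (-(1 / (p - 1)))) = Y at *
  generalize ((1 / t) * ∫ y in (0 : ℝ)..t, f y) ^ (-(1 / (p - 1))) = Z at *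
  generalize M ^ (1 / (q - 1)) = c at *
  have h2 := mul_le_mul_of_nonneg_left key
    (show 0 ≤ (q - 1) * (p - 1) / (q - p) by positivity)
  have e1 : (q - 1) * (p - 1) / (q - p) * (1 / (p - 1) * X) = (q - 1) / (q - p) * X := by
    field_simp
  have e2 : (q - 1) * (p - 1) / (q - p) * ((1 / (p - 1) - 1 / (q - 1)) * c * Y +
      1 / (q - 1) * c * t * Z) = c * Y + (p - 1) / (q - p) * c * t * Z := by
    field_simp
    ring
  rw [e1, e2] at h2
  exact h2
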